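/- arXiv:2410.15852 — 7 statements merged into one kernel-verified Lean document; each statement's English description precedes it below -/
import Mathlib

section
/- For every integer n > 0, d1(n) + d1(n-1) = ped(n). -/
/-- No even part is repeated (all even parts are distinct). -/
def EvenDistinct {n : ℕ} (p : n.Partition) : Prop :=
  ∀ i, Even i → p.parts.count i ≤ 1

/-- No odd part is repeated (all odd parts are distinct). -/
def OddDistinct {n : ℕ} (p : n.Partition) : Prop :=
  ∀ i, Odd i → p.parts.count i ≤ 1

/-- The largest part of a partition (0 for the empty partition of 0). -/
def maxPart {n : ℕ} (p : n.Partition) : ℕ := p.parts.sup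

/-- Number of partitions of n with no even part repeated. -/
noncomputable def ped (n : ℕ) : ℕ := Nat.card {p : n.Partition // EvenDistinct p}

/-- Number of partitions of n with no even part repeated and largest part odd. -/
noncomputable def d1 (n : ℕ) : ℕ :=
  Nat.card {p : n.Partition // EvenDistinct p ∧ p.parts ≠ 0 ∧ Odd (maxPart p)}

/-!
Adding `1` to the largest part of a partition of `n` whose even parts are distinct gives a
partition of `n + 1` whose even parts are distinct: the new largest part exceeds all other parts.
If the largest part of a partition is even and its even parts are distinct, it occurs only once, so
subtracting `1` from it leaves it at least as large as all other parts. Hence the two operations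
are inverse bijections between such partitions of `n` with odd largest part and those of `n + 1`
with even largest part, and the partitions counted by `ped (n + 1)` split by the parity of their
largest part.
-/

section ReplaceSup

variable {α : Type*} [LinearOrder α] [OrderBot α] {s : Multiset α} {a b : α}

theorem sup_mem_of_ne_zero (hs : s ≠ 0) : s.sup ∈ s := by
  obtain ⟨a, ha, hsup⟩ := s.toFinset.exists_mem_eq_sup (Multiset.toFinset_nonempty.2 hs) id
  rw [Finset.sup_def, Multiset.map_id, Multiset.toFinset_val, Multiset.sup_dedup] at hsup
  rw [hsup]
  exact Multiset.mem_toFinset.1 ha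

theorem le_sup_of_mem_erase (ha : a ∈ s.erase b) : a ≤ s.sup :=
  Multiset.le_sup (Multiset.mem_of_mem_erase ha)

theorem lt_sup_of_mem_erase_sup (hs : s.count s.sup ≤ 1) (ha : a ∈ s.erase s.sup) : a < s.sup := by
  refine (le_sup_of_mem_erase ha).lt_of_ne ?_
  rintro rfl
  have hpos := Multiset.count_pos.2 ha
  rw [Multiset.count_erase_self] at hpos
  lia

/-- The multiset `s` with one copy of its largest element replaced by `b`; `replaceSup 0 b` is
`{b}`. It underlies the operations of increasing and decreasing the largest part of a partition. -/
def replaceSup (s : Multiset α) (b : α) : Multiset α := b ::ₘ s.erase s.sup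

theorem replaceSup_sup (hs : s ≠ 0) : replaceSup s s.sup = s :=
  Multiset.cons_erase (sup_mem_of_ne_zero hs)

theorem sup_replaceSup (hb : ∀ x ∈ s.erase s.sup, x ≤ b) : (replaceSup s b).sup = b := by
  rw [replaceSup, Multiset.sup_cons, sup_eq_left]
  exact Multiset.sup_le.2 hb

theorem replaceSup_replaceSup (hb : ∀ x ∈ s.erase s.sup, x ≤ b) (c : α) :
    replaceSup (replaceSup s b) c = replaceSup s c := by
  rw [replaceSup, sup_replaceSup hb, replaceSup, Multiset.erase_cons_head, replaceSup]

theorem count_replaceSup_le_of_ne (hab : a ≠ b) : (replaceSup s b).count a ≤ s.count a := by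
  rw [replaceSup, Multiset.count_cons_of_ne hab]
  exact Multiset.count_le_of_le a (Multiset.erase_le _ _)

theorem sum_replaceSup_add_sup [AddCommMonoid α] [CanonicallyOrderedAdd α] (s : Multiset α)
    (b : α) : (replaceSup s b).sum + s.sup = s.sum + b := by
  rcases eq_or_ne s 0 with rfl | hs
  · simp [replaceSup, bot_eq_zero']
  · rw [replaceSup, Multiset.sum_cons, add_assoc, add_comm (Multiset.sum _),
      Multiset.sum_erase (sup_mem_of_ne_zero hs), add_comm]

end ReplaceSup

section MaxPart

variable {n : ℕ}

/-- The partition of `n + 1` obtained by adding `1` to the largest part of `p`; the empty partition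
becomes the partition `1` of `1`. -/
def incMaxPart (p : n.Partition) : (n + 1).Partition where
  parts := replaceSup p.parts (maxPart p + 1)
  parts_pos {i} hi := by
    rcases Multiset.mem_cons.1 hi with rfl | hi
    · exact Nat.succ_pos _
    · exact p.parts_pos (Multiset.mem_of_mem_erase hi)
  parts_sum := by
    have hsum := sum_replaceSup_add_sup p.parts (maxPart p + 1)
    rw [p.parts_sum] at hsum
    unfold maxPart at hsum ⊢
    lia

/-- The partition of `n` obtained by subtracting `1` from the largest part of `p`, which has to
exceed `1` for the new part to be positive. -/
def decMaxPart (p : (n + 1).Partition) (hp : 1 < maxPart p) : n.Partition where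
  parts := replaceSup p.parts (maxPart p - 1)
  parts_pos {i} hi := by
    rcases Multiset.mem_cons.1 hi with rfl | hi
    · exact Nat.sub_pos_of_lt hp
    · exact p.parts_pos (Multiset.mem_of_mem_erase hi)
  parts_sum := by
    have hsum := sum_replaceSup_add_sup p.parts (maxPart p - 1)
    rw [p.parts_sum] at hsum
    unfold maxPart at hsum hp ⊢
    lia

theorem le_maxPart_add_one_of_mem_erase {p : n.Partition} :
    ∀ x ∈ p.parts.erase p.parts.sup, x ≤ maxPart p + 1 :=
  fun _ hx ↦ (le_sup_of_mem_erase hx).trans (Nat.le_succ _)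

theorem le_maxPart_sub_one_of_mem_erase {p : n.Partition}
    (hp : p.parts.count (maxPart p) ≤ 1) :
    ∀ x ∈ p.parts.erase p.parts.sup, x ≤ maxPart p - 1 :=
  fun _ hx ↦ Nat.le_sub_one_of_lt (lt_sup_of_mem_erase_sup hp hx)

theorem maxPart_incMaxPart (p : n.Partition) : maxPart (incMaxPart p) = maxPart p + 1 :=
  sup_replaceSup le_maxPart_add_one_of_mem_erase

theorem maxPart_decMaxPart {p : (n + 1).Partition} (hp : 1 < maxPart p)
    (hcount : p.parts.count (maxPart p) ≤ 1) : maxPart (decMaxPart p hp) = maxPart p - 1 :=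
  sup_replaceSup (le_maxPart_sub_one_of_mem_erase hcount)

theorem parts_ne_zero_of_maxPart_pos {p : n.Partition} (hp : 0 < maxPart p) : p.parts ≠ 0 :=
  fun h ↦ hp.ne' (by rw [maxPart, h, Multiset.sup_zero, bot_eq_zero])

theorem maxPart_pos (p : (n + 1).Partition) : 0 < maxPart p := by
  refine p.parts_pos (sup_mem_of_ne_zero fun h ↦ ?_)
  simpa [h] using p.parts_sum

theorem one_lt_maxPart_of_even {p : (n + 1).Partition} (hp : Even (maxPart p)) :
    1 < maxPart p := by
  have hpos := maxPart_pos p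
  grind

theorem decMaxPart_incMaxPart {p : n.Partition} (hp : 1 < maxPart (incMaxPart p)) :
    decMaxPart (incMaxPart p) hp = p := by
  have hpos : 0 < maxPart p := by rwa [maxPart_incMaxPart, Nat.lt_add_left_iff_pos] at hp
  refine Nat.Partition.ext ?_
  calc replaceSup (incMaxPart p).parts (maxPart (incMaxPart p) - 1)
      = replaceSup (replaceSup p.parts (maxPart p + 1)) (maxPart p) := by
        rw [maxPart_incMaxPart, Nat.add_sub_cancel, incMaxPart]
    _ = replaceSup p.parts (maxPart p) :=
        replaceSup_replaceSup le_maxPart_add_one_of_mem_erase _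
    _ = p.parts := replaceSup_sup (parts_ne_zero_of_maxPart_pos hpos)

theorem incMaxPart_decMaxPart {p : (n + 1).Partition} (hp : 1 < maxPart p)
    (hcount : p.parts.count (maxPart p) ≤ 1) : incMaxPart (decMaxPart p hp) = p := by
  refine Nat.Partition.ext ?_
  calc replaceSup (decMaxPart p hp).parts (maxPart (decMaxPart p hp) + 1)
      = replaceSup (replaceSup p.parts (maxPart p - 1)) (maxPart p) := by
        rw [maxPart_decMaxPart hp hcount, Nat.sub_add_cancel hp.le, decMaxPart]
    _ = replaceSup p.parts (maxPart p) :=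
        replaceSup_replaceSup (le_maxPart_sub_one_of_mem_erase hcount) _
    _ = p.parts := replaceSup_sup (parts_ne_zero_of_maxPart_pos (maxPart_pos p))

theorem EvenDistinct.incMaxPart {p : n.Partition} (hp : EvenDistinct p) :
    EvenDistinct (incMaxPart p) := by
  intro i hi
  rcases eq_or_ne i (maxPart p + 1) with rfl | hne
  · have hnotMem : maxPart p + 1 ∉ p.parts.erase p.parts.sup :=
      fun hmem ↦ (Nat.lt_succ_self _).not_ge (le_sup_of_mem_erase hmem)
    exact (Multiset.count_cons_self _ _).trans_le
      (Nat.succ_le_succ (Multiset.count_eq_zero_of_notMem hnotMem).le)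
  · exact (count_replaceSup_le_of_ne hne).trans (hp i hi)

theorem EvenDistinct.decMaxPart {p : (n + 1).Partition} (hp : EvenDistinct p)
    (heven : Even (maxPart p)) (hmax : 1 < maxPart p) : EvenDistinct (decMaxPart p hmax) := by
  intro i hi
  have hne : i ≠ maxPart p - 1 := by grind
  exact (count_replaceSup_le_of_ne hne).trans (hp i hi)

end MaxPart

/-- Adding `1` to the largest part, as a bijection between partitions with distinct even parts. -/
def oddMaxPartEquivEvenMaxPart (n : ℕ) :
    {p : n.Partition // EvenDistinct p ∧ Odd (maxPart p)} ≃
      {p : (n + 1).Partition // EvenDistinct p ∧ Even (maxPart p)} where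
  toFun := fun ⟨p, hp, hodd⟩ ↦
    ⟨incMaxPart p, hp.incMaxPart, (maxPart_incMaxPart p).symm ▸ hodd.add_one⟩
  invFun := fun ⟨p, hp, heven⟩ ↦
    have hmax := one_lt_maxPart_of_even heven
    ⟨decMaxPart p hmax, hp.decMaxPart heven hmax,
      (maxPart_decMaxPart hmax (hp _ heven)).symm ▸ Nat.Even.sub_odd hmax.le heven odd_one⟩
  left_inv := by
    rintro ⟨p, _, hodd⟩
    have hmax : 1 < maxPart (incMaxPart p) := by simpa [maxPart_incMaxPart] using hodd.pos
    exact Subtype.ext (decMaxPart_incMaxPart hmax)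
  right_inv := by
    rintro ⟨p, hp, heven⟩
    exact Subtype.ext (incMaxPart_decMaxPart _ (hp _ heven))

theorem d1_eq_card_odd_maxPart (n : ℕ) :
    d1 n = Nat.card {p : n.Partition // EvenDistinct p ∧ Odd (maxPart p)} :=
  Nat.card_congr <| Equiv.subtypeEquivRight fun _ ↦ and_congr_right fun _ ↦
    and_iff_right_of_imp fun hodd ↦ parts_ne_zero_of_maxPart_pos hodd.pos

theorem card_even_maxPart_succ (n : ℕ) :
    Nat.card {p : (n + 1).Partition // EvenDistinct p ∧ Even (maxPart p)} = d1 n := by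
  rw [d1_eq_card_odd_maxPart, Nat.card_congr (oddMaxPartEquivEvenMaxPart n)]

theorem d1_add_card_even_maxPart (n : ℕ) :
    d1 n + Nat.card {p : n.Partition // EvenDistinct p ∧ Even (maxPart p)} = ped n := by
  simp only [d1_eq_card_odd_maxPart, ← Nat.not_odd_iff_even]
  exact Set.ncard_inter_add_ncard_sdiff_eq_ncard {p : n.Partition | EvenDistinct p}
    {p | Odd (maxPart p)}

theorem d1_add_d1_eq_ped : ∀ n : ℕ, 0 < n → d1 n + d1 (n - 1) = ped n := by
  intro n hn
  obtain ⟨m, rfl⟩ := Nat.exists_eq_add_one.2 hn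
  rw [Nat.add_sub_cancel, ← card_even_maxPart_succ m, d1_add_card_even_maxPart]
end

section
/- For every integer n > 0, d2(n) + d2(n-3) = ped_{>1}(n), where d2(m) = 0 for m ≤ 0. -/
/-- Number of partitions of n with no even part repeated and every part > 1. -/
noncomputable def pedGtOne (n : ℕ) : ℕ :=
  Nat.card {p : n.Partition // EvenDistinct p ∧ ∀ i ∈ p.parts, 1 < i}

/-- Number of partitions of n with no even part repeated, largest part odd,
and the largest part appearing at least twice. -/
noncomputable def d2 (n : ℕ) : ℕ :=
  Nat.card {p : n.Partition // EvenDistinct p ∧ Odd (maxPart p) ∧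
    2 ≤ p.parts.count (maxPart p)}

/-!
Let `P m` be the generating function of the partitions without repeated even parts and with all
parts at most `m`, and `D m` that of those among them whose largest part is odd and repeated.
Removing copies of the largest part gives `(1 - X ^ (2k+1)) * P (2k+1) = P (2k)`,
`P (2k+2) = (1 + X ^ (2k+2)) * P (2k+1)` and `D (2k+2) = D (2k) + X ^ (4k+2) * P (2k+1)`, whence
`1 + (1 + X ^ 3) * D (2k) = (1 - X + X ^ (2k+1)) * P (2k)` by induction on `k`. As `k → ∞` the right
side tends to `(1 - X) * P ∞`, and multiplying by `1 - X` removes the partitions with a part `1`.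
-/

open PowerSeries

/-- The generating function, by size, of the partitions whose multiset of parts satisfies `p`. -/
noncomputable def partitionSeries (p : Multiset ℕ → Prop) : ℤ⟦X⟧ :=
  mk fun n ↦ (Nat.card {q : n.Partition // p q.parts} : ℤ)

/-- The generating function of the partitions satisfying `p` all of whose parts are at most `m`. -/
noncomputable def partitionSeriesLE (p : Multiset ℕ → Prop) (m : ℕ) : ℤ⟦X⟧ :=
  partitionSeries fun s ↦ p s ∧ ∀ i ∈ s, i ≤ m

/-- `EvenDistinct` for a multiset in place of a partition, so that parts can be added and removed
without changing the type. -/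
def EvenPartsDistinct (s : Multiset ℕ) : Prop :=
  ∀ i, Even i → s.count i ≤ 1

/-- The condition on the parts of a partition under which it is counted by `d2`. -/
def IsD2Parts (s : Multiset ℕ) : Prop :=
  EvenPartsDistinct s ∧ Odd s.sup ∧ 2 ≤ s.count s.sup

section PartitionSeries

variable {p q : Multiset ℕ → Prop} {a m : ℕ}

theorem partitionSeries_congr (h : ∀ s : Multiset ℕ, (∀ i ∈ s, 0 < i) → (p s ↔ q s)) :
    partitionSeries p = partitionSeries q := by
  ext n
  simp only [partitionSeries, coeff_mk, h _ fun _ ↦ Nat.Partition.parts_pos _]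

theorem partitionSeriesLE_congr (h : ∀ s : Multiset ℕ, (∀ i ∈ s, i ≤ m) → (p s ↔ q s)) :
    partitionSeriesLE p m = partitionSeriesLE q m :=
  partitionSeries_congr fun s _ ↦ and_congr_left (h s)

theorem partitionSeries_eq_and_add_not_and (p q : Multiset ℕ → Prop) :
    partitionSeries p =
      partitionSeries (fun s ↦ q s ∧ p s) + partitionSeries fun s ↦ ¬q s ∧ p s := by
  ext n
  simp only [partitionSeries, map_add, coeff_mk, and_comm (b := p _)]
  exact_mod_cast (Set.ncard_inter_add_ncard_sdiff_eq_ncard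
    {r : n.Partition | p r.parts} {r | q r.parts}).symm

theorem card_partition_mem_and (p : Multiset ℕ → Prop) {n : ℕ} (ha : 0 < a) (han : a ≤ n) :
    Nat.card {r : n.Partition // a ∈ r.parts ∧ p r.parts} =
      Nat.card {r : (n - a).Partition // p (a ::ₘ r.parts)} := by
  let removePart := Nat.Partition.partitionWithPartEquiv ha han
  have cons_removePart (r) : a ::ₘ (removePart r).parts = r.1.parts := by
    rw [Nat.Partition.partitionWithPartEquiv_apply_parts, Multiset.cons_erase r.2]
  exact Nat.card_congr <| (Equiv.subtypeSubtypeEquivSubtypeInter _ _).symm.trans <|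
    removePart.subtypeEquiv fun r ↦ by rw [cons_removePart]

theorem partitionSeries_mem_and (p : Multiset ℕ → Prop) (ha : 0 < a) :
    partitionSeries (fun s ↦ a ∈ s ∧ p s) = X ^ a * partitionSeries fun s ↦ p (a ::ₘ s) := by
  ext n
  rw [coeff_X_pow_mul']
  simp only [partitionSeries, coeff_mk]
  split_ifs with han
  · rw [card_partition_mem_and p ha han]
  · have : IsEmpty {r : n.Partition // a ∈ r.parts ∧ p r.parts} :=
      ⟨fun r ↦ han (Nat.Partition.le_of_mem_parts r.2.1)⟩
    simp

theorem partitionSeries_eq_X_pow_mul_add (p : Multiset ℕ → Prop) (ha : 0 < a) :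
    partitionSeries p =
      X ^ a * partitionSeries (fun s ↦ p (a ::ₘ s)) + partitionSeries fun s ↦ a ∉ s ∧ p s := by
  rw [partitionSeries_eq_and_add_not_and p (a ∈ ·), partitionSeries_mem_and p ha]

theorem partitionSeriesLE_mem_and (p : Multiset ℕ → Prop) (ha : 0 < a) (ham : a ≤ m) :
    partitionSeriesLE (fun s ↦ a ∈ s ∧ p s) m =
      X ^ a * partitionSeriesLE (fun s ↦ p (a ::ₘ s)) m := by
  simpa [partitionSeriesLE, ham, and_assoc] using
    partitionSeries_mem_and (fun s ↦ p s ∧ ∀ i ∈ s, i ≤ m) ha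

theorem partitionSeriesLE_succ_notMem_and (p : Multiset ℕ → Prop) (m : ℕ) :
    partitionSeriesLE (fun s ↦ m + 1 ∉ s ∧ p s) (m + 1) = partitionSeriesLE p m := by
  refine partitionSeries_congr fun s _ ↦ ?_
  have forall_le_iff : (∀ i ∈ s, i ≤ m) ↔ m + 1 ∉ s ∧ ∀ i ∈ s, i ≤ m + 1 := by grind
  rw [forall_le_iff]
  tauto

theorem partitionSeriesLE_succ (p : Multiset ℕ → Prop) (m : ℕ) :
    partitionSeriesLE p (m + 1) =
      X ^ (m + 1) * partitionSeriesLE (fun s ↦ p ((m + 1) ::ₘ s)) (m + 1) +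
        partitionSeriesLE p m := by
  rw [← partitionSeriesLE_succ_notMem_and p m]
  simpa [partitionSeriesLE, and_assoc] using
    partitionSeries_eq_X_pow_mul_add (fun s ↦ p s ∧ ∀ i ∈ s, i ≤ m + 1) (Nat.add_one_pos m)

theorem partitionSeriesLE_eq_zero (h : ∀ s : Multiset ℕ, (∀ i ∈ s, i ≤ m) → ¬p s) :
    partitionSeriesLE p m = 0 := by
  ext n
  have : IsEmpty {r : n.Partition // p r.parts ∧ ∀ i ∈ r.parts, i ≤ m} :=
    ⟨fun r ↦ h _ r.2.2 r.2.1⟩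
  simp [partitionSeriesLE, partitionSeries]

theorem partitionSeriesLE_zero (hp : p 0) : partitionSeriesLE p 0 = 1 := by
  ext n
  simp only [partitionSeriesLE, partitionSeries, coeff_mk, coeff_one]
  split_ifs with hn
  · subst hn
    simp [hp]
  · have : IsEmpty {r : n.Partition // p r.parts ∧ ∀ i ∈ r.parts, i ≤ 0} := by
      refine ⟨fun ⟨r, _, hr⟩ ↦ hn ?_⟩
      rw [← r.parts_sum]
      exact Multiset.sum_eq_zero fun i hi ↦ Nat.le_zero.mp (hr i hi)
    rw [Nat.card_of_isEmpty, Nat.cast_zero]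

theorem X_pow_dvd_partitionSeries_sub (p : Multiset ℕ → Prop) (m : ℕ) :
    X ^ (m + 1) ∣ partitionSeries p - partitionSeriesLE p m := by
  refine X_pow_dvd_iff.mpr fun n hn ↦ ?_
  have parts_le (r : n.Partition) : ∀ i ∈ r.parts, i ≤ m := fun i hi ↦
    (Nat.Partition.le_of_mem_parts hi).trans (Nat.le_of_lt_succ hn)
  simp [partitionSeriesLE, partitionSeries, fun r : n.Partition ↦ iff_true_intro (parts_le r)]

end PartitionSeries

section Parts

variable {a : ℕ} {s : Multiset ℕ}

theorem evenPartsDistinct_zero : EvenPartsDistinct 0 := by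
  simp [EvenPartsDistinct]

theorem evenPartsDistinct_cons_of_odd (ha : Odd a) :
    EvenPartsDistinct (a ::ₘ s) ↔ EvenPartsDistinct s := by
  refine forall₂_congr fun i hi ↦ ?_
  have i_ne_a : i ≠ a := fun hia ↦ Nat.not_even_iff_odd.mpr ha (hia ▸ hi)
  rw [Multiset.count_cons_of_ne i_ne_a]

theorem evenPartsDistinct_cons_of_even (ha : Even a) :
    EvenPartsDistinct (a ::ₘ s) ↔ a ∉ s ∧ EvenPartsDistinct s := by
  simp only [EvenPartsDistinct, Multiset.count_cons, ← Multiset.count_eq_zero]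
  grind

theorem multiset_sup_cons_of_forall_le {α : Type*} [SemilatticeSup α] [OrderBot α] {a : α}
    {s : Multiset α} (hs : ∀ i ∈ s, i ≤ a) : (a ::ₘ s).sup = a := by
  rw [Multiset.sup_cons, sup_eq_left, Multiset.sup_le]
  exact hs

theorem isD2Parts_cons_of_odd (ha : Odd a) (hs : ∀ i ∈ s, i ≤ a) :
    IsD2Parts (a ::ₘ s) ↔ a ∈ s ∧ EvenPartsDistinct s := by
  rw [IsD2Parts, multiset_sup_cons_of_forall_le hs, evenPartsDistinct_cons_of_odd ha,
    Multiset.count_cons_self, ← Multiset.one_le_count_iff_mem]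
  grind

theorem not_isD2Parts_cons_of_even (ha : Even a) (hs : ∀ i ∈ s, i ≤ a) :
    ¬IsD2Parts (a ::ₘ s) := by
  rw [IsD2Parts, multiset_sup_cons_of_forall_le hs]
  exact fun h ↦ Nat.not_odd_iff_even.mpr ha h.2.1

end Parts

section Recurrences

variable {m : ℕ}

theorem partitionSeriesLE_evenPartsDistinct_of_odd (hm : Odd (m + 1)) :
    partitionSeriesLE EvenPartsDistinct m =
      (1 - X ^ (m + 1)) * partitionSeriesLE EvenPartsDistinct (m + 1) := by
  have h := partitionSeriesLE_succ EvenPartsDistinct m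
  simp only [evenPartsDistinct_cons_of_odd hm] at h
  linear_combination -h

theorem partitionSeriesLE_evenPartsDistinct_of_even (hm : Even (m + 1)) :
    partitionSeriesLE EvenPartsDistinct (m + 1) =
      (1 + X ^ (m + 1)) * partitionSeriesLE EvenPartsDistinct m := by
  rw [partitionSeriesLE_succ]
  simp only [evenPartsDistinct_cons_of_even hm]
  rw [partitionSeriesLE_succ_notMem_and]
  ring

theorem partitionSeriesLE_isD2Parts_zero : partitionSeriesLE IsD2Parts 0 = 0 := by
  refine partitionSeriesLE_eq_zero fun s hs h ↦ ?_
  have sup_eq_zero : s.sup = 0 := Nat.le_zero.mp (Multiset.sup_le.mpr hs)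
  exact Nat.not_odd_zero (sup_eq_zero ▸ h.2.1)

theorem partitionSeriesLE_isD2Parts_of_odd (hm : Odd (m + 1)) :
    partitionSeriesLE IsD2Parts (m + 1) = partitionSeriesLE IsD2Parts m +
      X ^ (2 * (m + 1)) * partitionSeriesLE EvenPartsDistinct (m + 1) := by
  rw [partitionSeriesLE_succ,
    partitionSeriesLE_congr fun s hs ↦ isD2Parts_cons_of_odd hm hs,
    partitionSeriesLE_mem_and _ (Nat.add_one_pos m) le_rfl]
  simp only [evenPartsDistinct_cons_of_odd hm]
  ring

theorem partitionSeriesLE_isD2Parts_of_even (hm : Even (m + 1)) :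
    partitionSeriesLE IsD2Parts (m + 1) = partitionSeriesLE IsD2Parts m := by
  rw [partitionSeriesLE_succ,
    partitionSeriesLE_eq_zero fun s hs ↦ not_isD2Parts_cons_of_even hm hs, mul_zero, zero_add]

theorem partitionSeries_evenPartsDistinct_one_lt :
    partitionSeries (fun s ↦ EvenPartsDistinct s ∧ ∀ i ∈ s, 1 < i) =
      (1 - X) * partitionSeries EvenPartsDistinct := by
  have h := partitionSeries_eq_X_pow_mul_add EvenPartsDistinct one_pos
  simp only [evenPartsDistinct_cons_of_odd odd_one, pow_one] at h
  have exclude_one : partitionSeries (fun s ↦ 1 ∉ s ∧ EvenPartsDistinct s) =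
      partitionSeries fun s ↦ EvenPartsDistinct s ∧ ∀ i ∈ s, 1 < i :=
    partitionSeries_congr fun s hs ↦ by grind
  rw [exclude_one] at h
  linear_combination -h

end Recurrences

theorem one_add_mul_partitionSeriesLE_isD2Parts (k : ℕ) :
    1 + (1 + X ^ 3) * partitionSeriesLE IsD2Parts (2 * k) =
      (1 - X + X ^ (2 * k + 1)) * partitionSeriesLE EvenPartsDistinct (2 * k) := by
  induction k with
  | zero =>
    rw [partitionSeriesLE_zero evenPartsDistinct_zero, partitionSeriesLE_isD2Parts_zero]
    ring
  | succ k ih =>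
    have hodd : Odd (2 * k + 1) := odd_two_mul_add_one k
    have heven : Even (2 * k + 1 + 1) := hodd.add_one
    rw [partitionSeriesLE_evenPartsDistinct_of_odd hodd] at ih
    rw [show 2 * (k + 1) = 2 * k + 1 + 1 by ring,
      partitionSeriesLE_evenPartsDistinct_of_even heven,
      partitionSeriesLE_isD2Parts_of_even heven,
      partitionSeriesLE_isD2Parts_of_odd hodd]
    linear_combination ih

theorem one_add_mul_partitionSeries_isD2Parts :
    1 + (1 + X ^ 3) * partitionSeries IsD2Parts =
      partitionSeries fun s ↦ EvenPartsDistinct s ∧ ∀ i ∈ s, 1 < i := by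
  rw [partitionSeries_evenPartsDistinct_one_lt, ← sub_eq_zero]
  ext n
  refine X_pow_dvd_iff.mp ?_ n (show n < 2 * n + 1 by omega)
  obtain ⟨d, hd⟩ := X_pow_dvd_partitionSeries_sub IsD2Parts (2 * n)
  obtain ⟨e, he⟩ := X_pow_dvd_partitionSeries_sub EvenPartsDistinct (2 * n)
  refine ⟨(1 + X ^ 3) * d - (1 - X) * e + partitionSeriesLE EvenPartsDistinct (2 * n), ?_⟩
  linear_combination one_add_mul_partitionSeriesLE_isD2Parts n + (1 + X ^ 3) * hd - (1 - X) * he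

theorem coeff_partitionSeries_isD2Parts (n : ℕ) :
    coeff n (partitionSeries IsD2Parts) = d2 n :=
  coeff_mk n _

theorem coeff_partitionSeries_evenPartsDistinct_one_lt (n : ℕ) :
    coeff n (partitionSeries fun s ↦ EvenPartsDistinct s ∧ ∀ i ∈ s, 1 < i) = pedGtOne n :=
  coeff_mk n _

theorem d2_zero : d2 0 = 0 := by
  simp [d2, maxPart]

theorem d2_add_d2_eq_pedGtOne : ∀ n : ℕ, 0 < n → d2 n + d2 (n - 3) = pedGtOne n := by
  intro n hn
  have h := congrArg (coeff n) one_add_mul_partitionSeries_isD2Parts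
  rw [add_mul, one_mul] at h
  simp only [map_add, coeff_one, if_neg hn.ne', coeff_X_pow_mul', zero_add,
    coeff_partitionSeries_isD2Parts, coeff_partitionSeries_evenPartsDistinct_one_lt] at h
  split_ifs at h with h3
  · exact_mod_cast h
  · rw [Nat.sub_eq_zero_of_le (by omega), d2_zero]
    exact_mod_cast h
end

section
/- For every integer n > 0, d3(n+2) + d3(n-1) = ped(n). -/
/-- Number of partitions of n with no even part repeated, largest part odd,
and the largest part appearing exactly once. -/
noncomputable def d3 (n : ℕ) : ℕ :=
  Nat.card {p : n.Partition // EvenDistinct p ∧ Odd (maxPart p) ∧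
    p.parts.count (maxPart p) = 1}

/-!
Write a partition counted by `d3` as `2k + 1` followed by parts `≤ 2k`. Lowering its largest part to
`2k - 1` produces the partitions in which, `2j` being the largest part rounded up to an even number,
`2j - 1` occurs; raising it to `2k + 2` produces those in which `2j - 1` does not occur, so that the
largest part is `2j`, occurs once, and exceeds all other parts by at least two.
-/

section Multiset

variable {α : Type*}

theorem sup_eq_and_count_eq_one_iff [LinearOrder α] [OrderBot α] {s : Multiset α} {a : α} :
    s.sup = a ∧ s.count a = 1 ↔ ∃ t : Multiset α, (∀ i ∈ t, i < a) ∧ a ::ₘ t = s := by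
  constructor
  · rintro ⟨h_sup, h_count⟩
    obtain ⟨t, rfl⟩ := Multiset.exists_cons_of_mem
      (Multiset.one_le_count_iff_mem.1 h_count.ge)
    have ha : a ∉ t := by simpa using h_count
    refine ⟨t, fun i hi => lt_of_le_of_ne ?_ (ne_of_mem_of_not_mem hi ha), rfl⟩
    exact (Multiset.le_sup (Multiset.mem_cons_of_mem hi)).trans_eq h_sup
  · rintro ⟨t, ht, rfl⟩
    have ha : a ∉ t := fun h => (ht a h).false
    have h_sup : t.sup ≤ a := Multiset.sup_le.2 fun i hi => (ht i hi).le
    simp [h_sup, ha]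

theorem injOn_cons_of_lt {ι : Type*} [LinearOrder ι] [Preorder α] {f g : ι → α}
    (hf : f.Injective) (hgf : ∀ ⦃a b⦄, a < b → g a < f b) :
    Set.InjOn (fun x : ι × Multiset α => f x.1 ::ₘ x.2) {x | ∀ i ∈ x.2, i ≤ g x.1} := by
  have le_of_cons_eq : ∀ {a b : ι} {s t : Multiset α}, (∀ i ∈ s, i ≤ g a) →
      f a ::ₘ s = f b ::ₘ t → b ≤ a := by
    refine fun {a b s t} hs h => not_lt.1 fun hab => ?_
    have hb : f b ∈ f a ::ₘ s := h ▸ Multiset.mem_cons_self _ _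
    rcases Multiset.mem_cons.1 hb with hb | hb
    · exact hab.ne' (hf hb)
    · exact ((hs _ hb).trans_lt (hgf hab)).false
  rintro ⟨a, s⟩ hs ⟨b, t⟩ ht h
  obtain rfl : a = b := le_antisymm (le_of_cons_eq ht h.symm) (le_of_cons_eq hs h)
  exact congrArg (Prod.mk a) ((Multiset.cons_inj_right _).1 h)

end Multiset

section Partition

theorem mem_range_parts_iff {n : ℕ} {s : Multiset ℕ} :
    s ∈ Set.range (Nat.Partition.parts (n := n)) ↔ (∀ i ∈ s, 0 < i) ∧ s.sum = n :=
  ⟨by rintro ⟨p, rfl⟩; exact ⟨fun _ => p.parts_pos, p.parts_sum⟩,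
    fun ⟨h_pos, h_sum⟩ => ⟨⟨s, h_pos _, h_sum⟩, rfl⟩⟩

theorem card_partition_parts_mem (n : ℕ) (S : Set (Multiset ℕ)) :
    Nat.card {p : n.Partition // p.parts ∈ S} =
      (S ∩ Set.range (Nat.Partition.parts (n := n))).ncard := by
  rw [← Set.image_preimage_eq_inter_range,
    Set.ncard_image_of_injective _ fun _ _ => Nat.Partition.ext]
  rfl

end Partition

/-- The multiset of parts of a partition with no repeated even part; unlike in `EvenDistinct`, the
number being partitioned is not fixed, so parts can be added and removed freely. -/
def IsPed (s : Multiset ℕ) : Prop :=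
  (∀ i ∈ s, 0 < i) ∧ ∀ i, Even i → s.count i ≤ 1

theorem isPed_cons {a : ℕ} {s : Multiset ℕ} :
    IsPed (a ::ₘ s) ↔ 0 < a ∧ (Even a → a ∉ s) ∧ IsPed s := by
  have h_count : (∀ i, Even i → (a ::ₘ s).count i ≤ 1) ↔
      (Even a → a ∉ s) ∧ ∀ i, Even i → s.count i ≤ 1 := by
    constructor
    · exact fun h => ⟨fun ha => by simpa using h a ha,
        fun i hi => (Multiset.count_le_count_cons i a s).trans (h i hi)⟩
    · rintro ⟨ha, hs⟩ i hi
      rcases eq_or_ne i a with rfl | hne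
      · simpa using ha hi
      · simpa [hne] using hs i hi
  rw [IsPed, h_count, Multiset.forall_mem_cons, IsPed]
  tauto

/-- The partitions counted by `ped n`, as multisets of parts. -/
def pedParts (n : ℕ) : Set (Multiset ℕ) := {s | IsPed s ∧ s.sum = n}

/-- The partitions counted by `d3 n`, split into their largest part and the rest: `(k, t)` stands
for the partition with largest part `2 * k + 1` and remaining parts `t`. -/
def d3Pairs (n : ℕ) : Set (ℕ × Multiset ℕ) :=
  {x | IsPed x.2 ∧ (∀ i ∈ x.2, i ≤ 2 * x.1) ∧ 2 * x.1 + 1 + x.2.sum = n}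

theorem pedParts_eq_inter_range (n : ℕ) :
    pedParts n = {s | ∀ i, Even i → s.count i ≤ 1} ∩
      Set.range (Nat.Partition.parts (n := n)) := by
  ext s
  simp only [pedParts, IsPed, Set.mem_inter_iff, Set.mem_ofPred_eq, mem_range_parts_iff]
  tauto

theorem finite_pedParts (n : ℕ) : (pedParts n).Finite := by
  rw [pedParts_eq_inter_range]
  exact (Set.finite_range _).inter_of_right _

theorem ped_eq_ncard_pedParts (n : ℕ) : ped n = (pedParts n).ncard := by
  rw [pedParts_eq_inter_range, ← card_partition_parts_mem]
  rfl

theorem d3_eq_ncard_inter_count_sup (n : ℕ) :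
    d3 n = (pedParts n ∩ {s | Odd s.sup ∧ s.count s.sup = 1}).ncard := by
  rw [pedParts_eq_inter_range, Set.inter_right_comm, ← card_partition_parts_mem]
  rfl

theorem image_cons_d3Pairs_eq_inter_count_sup (n : ℕ) :
    (fun x : ℕ × Multiset ℕ => (2 * x.1 + 1) ::ₘ x.2) '' d3Pairs n =
      pedParts n ∩ {s | Odd s.sup ∧ s.count s.sup = 1} := by
  ext s
  constructor
  · rintro ⟨⟨k, t⟩, ⟨h_ped, h_le, h_sum⟩, rfl⟩
    obtain ⟨h_sup, h_count⟩ := sup_eq_and_count_eq_one_iff.2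
      ⟨t, fun i hi => Nat.lt_succ_of_le (h_le i hi), rfl⟩
    have h_odd : Odd (2 * k + 1) := odd_two_mul_add_one k
    refine ⟨⟨isPed_cons.2 ⟨by omega, ?_, h_ped⟩, ?_⟩, ?_, ?_⟩
    · exact fun h_even => absurd h_even (Nat.not_even_iff_odd.2 h_odd)
    · rwa [Multiset.sum_cons]
    · rwa [h_sup]
    · rwa [h_sup]
  · rintro ⟨⟨h_ped, h_sum⟩, ⟨k, hk⟩, h_count⟩
    obtain ⟨t, h_lt, rfl⟩ := sup_eq_and_count_eq_one_iff.1 ⟨hk, hk ▸ h_count⟩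
    exact ⟨(k, t), ⟨(isPed_cons.1 h_ped).2.2, fun i hi => Nat.le_of_lt_succ (h_lt i hi),
      by rwa [Multiset.sum_cons] at h_sum⟩, rfl⟩

theorem ncard_image_cons_d3Pairs (n : ℕ) {f : ℕ → ℕ} (hf : f.Injective)
    (h_le : ∀ k, 2 * k ≤ f k + 1) :
    ((fun x : ℕ × Multiset ℕ => f x.1 ::ₘ x.2) '' d3Pairs n).ncard = (d3Pairs n).ncard := by
  have h_lt : ∀ ⦃a b : ℕ⦄, a < b → 2 * a < f b := fun a b hab => by
    have := h_le b
    omega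
  exact Set.InjOn.ncard_image ((injOn_cons_of_lt hf h_lt).mono fun _ hx => hx.2.1)

theorem d3_eq_ncard_d3Pairs (n : ℕ) : d3 n = (d3Pairs n).ncard := by
  rw [d3_eq_ncard_inter_count_sup, ← image_cons_d3Pairs_eq_inter_count_sup]
  exact ncard_image_cons_d3Pairs n (f := fun k => 2 * k + 1) (fun _ _ h => by grind)
    fun k => by omega

/-- With `2 * j` the largest element of `s` rounded up to an even number, `2 * j - 1` lies in `s`.
This separates the two summands `d3 (n + 2)` and `d3 (n - 1)` inside `ped n`. The index is shifted,
`j = k + 1`, to avoid subtraction. -/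
def HasOddTop (s : Multiset ℕ) : Prop :=
  ∃ k, 2 * k + 1 ∈ s ∧ ∀ i ∈ s, i ≤ 2 * k + 2

theorem hasOddTop_iff_exists_cons {s : Multiset ℕ} :
    HasOddTop s ↔ ∃ k t, (∀ i ∈ t, i ≤ 2 * k + 2) ∧ (2 * k + 1) ::ₘ t = s := by
  constructor
  · rintro ⟨k, hk, h_le⟩
    obtain ⟨t, rfl⟩ := Multiset.exists_cons_of_mem hk
    exact ⟨k, t, fun i hi => h_le i (Multiset.mem_cons_of_mem hi), rfl⟩
  · rintro ⟨k, t, h_le, rfl⟩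
    exact ⟨k, Multiset.mem_cons_self _ _, Multiset.forall_mem_cons.2 ⟨by omega, h_le⟩⟩

theorem not_hasOddTop_cons {k : ℕ} {t : Multiset ℕ} (h_le : ∀ i ∈ t, i ≤ 2 * k) :
    ¬HasOddTop ((2 * k + 2) ::ₘ t) := by
  rintro ⟨j, hj, h_top⟩
  have hkj : 2 * k + 2 ≤ 2 * j + 2 := h_top _ (Multiset.mem_cons_self _ _)
  rcases Multiset.mem_cons.1 hj with hj | hj
  · omega
  · have := h_le _ hj
    omega

theorem IsPed.exists_cons_of_not_hasOddTop {s : Multiset ℕ} (hs : IsPed s) (hs₀ : s ≠ 0)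
    (h_top : ¬HasOddTop s) : ∃ k t, (∀ i ∈ t, i ≤ 2 * k) ∧ (2 * k + 2) ::ₘ t = s := by
  obtain ⟨m, hm, h_le⟩ := Multiset.exists_max_image id hs₀
  have hm_even : Even m := by
    rw [← Nat.not_odd_iff_even]
    rintro ⟨j, rfl⟩
    exact h_top ⟨j, hm, fun i hi => (h_le i hi).trans (Nat.le_succ _)⟩
  obtain ⟨k, rfl⟩ : ∃ k, m = 2 * k + 2 := by
    obtain ⟨j, rfl⟩ := hm_even
    exact ⟨j - 1, by have := hs.1 _ hm; omega⟩
  have h_pred : 2 * k + 1 ∉ s := fun h => h_top ⟨k, h, h_le⟩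
  obtain ⟨t, rfl⟩ := Multiset.exists_cons_of_mem hm
  have h_self : 2 * k + 2 ∉ t := (isPed_cons.1 hs).2.1 hm_even
  refine ⟨k, t, fun i hi => ?_, rfl⟩
  have hi_mem : i ∈ (2 * k + 2) ::ₘ t := Multiset.mem_cons_of_mem hi
  have hi_le : i ≤ 2 * k + 2 := h_le i hi_mem
  have hi_ne_self : i ≠ 2 * k + 2 := ne_of_mem_of_not_mem hi h_self
  have hi_ne_pred : i ≠ 2 * k + 1 := ne_of_mem_of_not_mem hi_mem h_pred
  omega

theorem pos_of_mem_d3Pairs {n k : ℕ} {t : Multiset ℕ} (h : (k, t) ∈ d3Pairs (n + 2)) :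
    0 < k := by
  obtain ⟨h_ped, h_le, h_sum⟩ := h
  by_contra hk
  obtain rfl : k = 0 := by omega
  have ht : t = 0 := Multiset.eq_zero_of_forall_notMem fun i hi =>
    (h_ped.1 i hi).not_ge (h_le i hi)
  simp [ht] at h_sum

theorem image_cons_d3Pairs_eq_inter_hasOddTop (n : ℕ) :
    (fun x : ℕ × Multiset ℕ => (2 * x.1 - 1) ::ₘ x.2) '' d3Pairs (n + 2) =
      pedParts n ∩ {s | HasOddTop s} := by
  ext s
  constructor
  · rintro ⟨⟨k, t⟩, h, rfl⟩
    obtain ⟨j, rfl⟩ := Nat.exists_eq_add_one.2 (pos_of_mem_d3Pairs h)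
    obtain ⟨h_ped, h_le, h_sum⟩ := h
    have h_odd : Odd (2 * (j + 1) - 1) := odd_two_mul_add_one j
    refine ⟨⟨isPed_cons.2 ⟨h_odd.pos, fun h_even => ?_, h_ped⟩, ?_⟩, ?_⟩
    · exact absurd h_even (Nat.not_even_iff_odd.2 h_odd)
    · rw [Multiset.sum_cons]
      omega
    · exact hasOddTop_iff_exists_cons.2 ⟨j, t, h_le, rfl⟩
  · rintro ⟨⟨h_ped, h_sum⟩, h_top⟩
    obtain ⟨k, t, h_le, rfl⟩ := hasOddTop_iff_exists_cons.1 h_top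
    rw [Multiset.sum_cons] at h_sum
    exact ⟨(k + 1, t), ⟨(isPed_cons.1 h_ped).2.2, h_le, by dsimp only; omega⟩, rfl⟩

theorem image_cons_d3Pairs_eq_diff_hasOddTop (n : ℕ) :
    (fun x : ℕ × Multiset ℕ => (2 * x.1 + 2) ::ₘ x.2) '' d3Pairs n =
      pedParts (n + 1) \ {s | HasOddTop s} := by
  ext s
  constructor
  · rintro ⟨⟨k, t⟩, ⟨h_ped, h_le, h_sum⟩, rfl⟩
    refine ⟨⟨isPed_cons.2 ⟨by omega, fun _ h_mem => ?_, h_ped⟩, ?_⟩, not_hasOddTop_cons h_le⟩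
    · have := h_le _ h_mem
      omega
    · rw [Multiset.sum_cons]
      omega
  · rintro ⟨⟨h_ped, h_sum⟩, h_top⟩
    have h_ne : s ≠ 0 := by
      rintro rfl
      simp at h_sum
    obtain ⟨k, t, h_le, rfl⟩ := h_ped.exists_cons_of_not_hasOddTop h_ne h_top
    rw [Multiset.sum_cons] at h_sum
    exact ⟨(k, t), ⟨(isPed_cons.1 h_ped).2.2, h_le, by dsimp only; omega⟩, rfl⟩

theorem d3_eq_ncard_inter_hasOddTop (n : ℕ) :
    d3 (n + 2) = (pedParts n ∩ {s | HasOddTop s}).ncard := by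
  rw [d3_eq_ncard_d3Pairs, ← image_cons_d3Pairs_eq_inter_hasOddTop,
    ncard_image_cons_d3Pairs (n + 2) (f := fun k => 2 * k - 1) (fun _ _ h => by grind)
      fun k => by omega]

theorem d3_eq_ncard_diff_hasOddTop (n : ℕ) :
    d3 n = (pedParts (n + 1) \ {s | HasOddTop s}).ncard := by
  rw [d3_eq_ncard_d3Pairs, ← image_cons_d3Pairs_eq_diff_hasOddTop,
    ncard_image_cons_d3Pairs n (f := fun k => 2 * k + 2) (fun _ _ h => by grind)
      fun k => by omega]

theorem d3_add_d3_eq_ped : ∀ n : ℕ, 0 < n → d3 (n + 2) + d3 (n - 1) = ped n := by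
  intro n hn
  rw [d3_eq_ncard_inter_hasOddTop, d3_eq_ncard_diff_hasOddTop, Nat.sub_add_cancel hn,
    ped_eq_ncard_pedParts]
  exact Set.ncard_inter_add_ncard_sdiff_eq_ncard _ _ (finite_pedParts n)
end

section
/- For every integer n > 2, o3(n+2) + o3(n-1) = pod(n). -/
/-- Number of partitions of n with no odd part repeated. -/
noncomputable def pod (n : ℕ) : ℕ := Nat.card {p : n.Partition // OddDistinct p}

/-- Number of partitions of n with no odd part repeated, largest part even,
and the largest part appearing exactly once. -/
noncomputable def o3 (n : ℕ) : ℕ :=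
  Nat.card {p : n.Partition // OddDistinct p ∧ p.parts ≠ 0 ∧ Even (maxPart p) ∧
    p.parts.count (maxPart p) = 1}

/-!
Remove from a partition counted by `o3 (n + 2)` its largest part `2 * m + 2`: what is left is a
*core*, a partition of `n - 2 * m` into parts at most `2 * m + 1` with no odd part repeated, and
every such pair `(m, core)` arises. A partition of `n ≥ 2` with no odd part repeated is obtained
from exactly one core, in exactly one of two ways. If its largest part is odd, say `2 * m + 3`, and
`2 * m + 2` is not a part, it is `2 * m + 3` added to a core; otherwise its largest even part is
some `2 * m` and no part exceeds `2 * m + 1`, so it is `2 * m` added to a core. Hence `pod n` counts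
the cores counted by `o3 (n + 2)` together with those counted by `o3 (n - 1)`.
-/

/-- No odd number is repeated in `s`; the multiset form of `OddDistinct`. -/
def OddNodup (s : Multiset ℕ) : Prop :=
  ∀ i, Odd i → s.count i ≤ 1

/-- The pair `x = (m, c)` is a core of weight `n`: the multiset `c` consists of the parts of a
partition of `n - 2 * m` with no odd part repeated and no part exceeding `2 * m + 1`. -/
structure IsCore (n : ℕ) (x : ℕ × Multiset ℕ) : Prop where
  zero_notMem : 0 ∉ x.2
  oddNodup : OddNodup x.2
  le : ∀ i ∈ x.2, i ≤ 2 * x.1 + 1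
  weight : 2 * x.1 + x.2.sum = n

/-- The set of cores of weight `n`, whose cardinality is the common count behind `o3` and `pod`. -/
def cores (n : ℕ) : Set (ℕ × Multiset ℕ) :=
  {x | IsCore n x}

/-- The multiset obtained from a core `(m, c)` by adding the part `2 * m + d`. -/
def insertTop (d : ℕ) (x : ℕ × Multiset ℕ) : Multiset ℕ :=
  (2 * x.1 + d) ::ₘ x.2

section Multiset

variable {s t : Multiset ℕ} {a : ℕ}

lemma sup_mem_of_ne_zero_s5 {α : Type*} [LinearOrder α] [OrderBot α] {s : Multiset α} (hs : s ≠ 0) :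
    s.sup ∈ s := by
  induction s using Multiset.induction_on with
  | empty => exact absurd rfl hs
  | cons a s ih =>
    rcases eq_or_ne s 0 with rfl | hs'
    · simp
    · rw [Multiset.sup_cons]
      rcases max_choice a s.sup with h | h <;> simp [h, ih hs']

lemma OddNodup.mono (ht : OddNodup t) (hst : s ≤ t) : OddNodup s :=
  fun i hi ↦ (Multiset.count_le_of_le i hst).trans (ht i hi)

lemma oddNodup_cons : OddNodup (a ::ₘ s) ↔ OddNodup s ∧ (Odd a → a ∉ s) := by
  simp only [OddNodup, Multiset.count_cons, ← Multiset.count_eq_zero]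
  grind

lemma sum_eq_count_one (hle : ∀ i ∈ s, i ≤ 1) : s.sum = s.count 1 := by
  induction s using Multiset.induction_on with
  | empty => simp
  | cons a s ih =>
    have ha : a ≤ 1 := hle a (Multiset.mem_cons_self a s)
    have ih := ih fun i hi ↦ hle i (Multiset.mem_cons_of_mem hi)
    interval_cases a <;> simp [ih, add_comm]

lemma OddNodup.sum_le_one (hs : OddNodup s) (hle : ∀ i ∈ s, i ≤ 1) : s.sum ≤ 1 :=
  (sum_eq_count_one hle).trans_le (hs 1 odd_one)

lemma exists_even_top_or_odd_top (hs : 2 ≤ s.sup) :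
    (∃ m, 2 * m ∈ s ∧ ∀ i ∈ s, i ≤ 2 * m + 1) ∨
      ∃ m, 2 * m + 3 ∈ s ∧ 2 * m + 2 ∉ s ∧ ∀ i ∈ s, i ≤ 2 * m + 3 := by
  have hmem : s.sup ∈ s := sup_mem_of_ne_zero_s5 (by rintro rfl; simp at hs)
  have hle : ∀ i ∈ s, i ≤ s.sup := fun i ↦ Multiset.le_sup
  rcases Nat.even_or_odd' s.sup with ⟨k, hk | hk⟩ <;> rw [hk] at hs hmem hle
  · exact .inl ⟨k, hmem, fun i hi ↦ (hle i hi).trans (Nat.le_succ _)⟩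
  · by_cases hpred : 2 * k ∈ s
    · exact .inl ⟨k, hpred, hle⟩
    · obtain ⟨m, rfl⟩ : ∃ m, k = m + 1 := ⟨k - 1, by omega⟩
      exact .inr ⟨m, hmem, hpred, hle⟩

end Multiset

section Cores

variable {n m d : ℕ} {s : Multiset ℕ} {x : ℕ × Multiset ℕ}

namespace IsCore

lemma fst_pos (hx : IsCore n x) (hn : 2 ≤ n) : 0 < x.1 := by
  by_contra! hx0
  have := hx.oddNodup.sum_le_one fun i hi ↦ (hx.le i hi).trans (by omega)
  have := hx.weight
  omega

lemma top_notMem (hx : IsCore n x) (hd : 2 ≤ d) : 2 * x.1 + d ∉ x.2 := fun h ↦ by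
  have := hx.le _ h
  omega

lemma zero_notMem_insertTop (hx : IsCore n x) (htop : 0 < 2 * x.1 + d) : 0 ∉ insertTop d x := by
  rw [insertTop, Multiset.mem_cons, not_or]
  exact ⟨htop.ne, hx.zero_notMem⟩

lemma oddNodup_insertTop (hx : IsCore n x) (hd : d ≠ 1) : OddNodup (insertTop d x) := by
  refine oddNodup_cons.2 ⟨hx.oddNodup, fun hodd ↦ hx.top_notMem ?_⟩
  have : d ≠ 0 := by
    rintro rfl
    exact Nat.not_odd_iff_even.2 (even_two_mul x.1) hodd
  omega

lemma sum_insertTop (hx : IsCore n x) (d : ℕ) : (insertTop d x).sum = n + d := by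
  have := hx.weight
  rw [insertTop, Multiset.sum_cons]
  omega

end IsCore

lemma insertTop_injOn_cores (d n : ℕ) : Set.InjOn (insertTop d) (cores n) := by
  rintro ⟨m, c⟩ hx ⟨m', c'⟩ hx' h
  have hc := hx.le
  have hc' := hx'.le
  simp only [insertTop] at h hc hc'
  have hm : 2 * m + d ∈ (2 * m' + d) ::ₘ c' := h ▸ Multiset.mem_cons_self _ _
  have hm' : 2 * m' + d ∈ (2 * m + d) ::ₘ c := h ▸ Multiset.mem_cons_self _ _
  -- If `m < m'`, the part `2 * m' + d` lies in `c`, whose parts are at most `2 * m + 1`.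
  obtain rfl : m = m' := by grind
  rw [(Multiset.cons_inj_right _).1 h]

lemma disjoint_insertTop_zero_insertTop_three (k l : ℕ) :
    Disjoint (insertTop 0 '' cores k) (insertTop 3 '' cores l) := by
  rw [Set.disjoint_left]
  rintro _ ⟨⟨m, c⟩, hx, rfl⟩ ⟨⟨m', c'⟩, hx', h⟩
  have hc := hx.le
  have hc' := hx'.le
  simp only [insertTop] at h hc hc'
  have hm : 2 * m + 0 ∈ (2 * m' + 3) ::ₘ c' := h ▸ Multiset.mem_cons_self _ _
  have hm' : 2 * m' + 3 ∈ (2 * m + 0) ::ₘ c := h ▸ Multiset.mem_cons_self _ _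
  -- Each added part lies in the other core by parity: `2 * m ≤ 2 * m' + 1`, `2 * m' + 2 ≤ 2 * m`.
  grind

lemma mem_image_insertTop (h0 : 0 ∉ s) (hs : OddNodup s) (hsum : s.sum = n + d)
    (hm : 2 * m + d ∈ s) (hle : ∀ i ∈ s.erase (2 * m + d), i ≤ 2 * m + 1) :
    s ∈ insertTop d '' cores n := by
  refine ⟨(m, s.erase (2 * m + d)), ⟨fun h ↦ h0 (Multiset.mem_of_mem_erase h),
    hs.mono (Multiset.erase_le _ _), hle, ?_⟩, Multiset.cons_erase hm⟩
  have := Multiset.sum_erase hm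
  simp only
  omega

lemma mem_image_insertTop_two_iff :
    s ∈ insertTop 2 '' cores n ↔
      0 ∉ s ∧ s.sum = n + 2 ∧ OddNodup s ∧ s ≠ 0 ∧ Even s.sup ∧ s.count s.sup = 1 := by
  constructor
  · rintro ⟨⟨m, c⟩, hx, rfl⟩
    have htop : 2 * m + 2 ∉ c := hx.top_notMem le_rfl
    have hsup : (insertTop 2 (m, c)).sup = 2 * m + 2 := by
      rw [insertTop, Multiset.sup_cons, sup_eq_left, Multiset.sup_le]
      exact fun i hi ↦ (hx.le i hi).trans (Nat.le_succ _)
    refine ⟨hx.zero_notMem_insertTop (by omega), hx.sum_insertTop 2,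
      hx.oddNodup_insertTop (by omega), Multiset.cons_ne_zero, ?_, ?_⟩
    · rw [hsup]
      exact (even_two_mul m).add even_two
    · rw [hsup, insertTop, Multiset.count_cons_self, Multiset.count_eq_zero_of_notMem htop]
  · rintro ⟨h0, hsum, hodd, hne, heven, hcount⟩
    have hmem := sup_mem_of_ne_zero_s5 hne
    obtain ⟨m, hm⟩ : ∃ m, s.sup = 2 * m + 2 := by
      obtain ⟨k, hk⟩ := heven
      have : s.sup ≠ 0 := ne_of_mem_of_not_mem hmem h0
      exact ⟨k - 1, by omega⟩
    have hle : ∀ i ∈ s, i ≤ 2 * m + 2 := fun i hi ↦ hm ▸ Multiset.le_sup hi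
    rw [hm] at hmem hcount
    have htop : 2 * m + 2 ∉ s.erase (2 * m + 2) := by
      rw [← Multiset.count_eq_zero, Multiset.count_erase_self, hcount]
    refine mem_image_insertTop h0 hodd hsum hmem fun i hi ↦ ?_
    have := hle i (Multiset.mem_of_mem_erase hi)
    have := ne_of_mem_of_not_mem hi htop
    omega

lemma mem_image_insertTop_zero_or_three (h0 : 0 ∉ s) (hsum : s.sum = n + 3) (hodd : OddNodup s) :
    s ∈ insertTop 0 '' cores (n + 3) ∨ s ∈ insertTop 3 '' cores n := by
  have hsup : 2 ≤ s.sup := by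
    by_contra! h
    have := hodd.sum_le_one fun i hi ↦ (Multiset.le_sup hi).trans (by omega)
    omega
  rcases exists_even_top_or_odd_top hsup with ⟨m, hm, hle⟩ | ⟨m, hm, hpred, hle⟩
  · exact .inl (mem_image_insertTop h0 hodd hsum hm fun i hi ↦ hle i (Multiset.mem_of_mem_erase hi))
  · have htop : 2 * m + 3 ∉ s.erase (2 * m + 3) := by
      rw [← Multiset.cons_erase hm, oddNodup_cons] at hodd
      exact hodd.2 ⟨m + 1, by ring⟩
    refine .inr (mem_image_insertTop h0 hodd hsum hm fun i hi ↦ ?_)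
    have his := Multiset.mem_of_mem_erase hi
    have := hle i his
    have := ne_of_mem_of_not_mem hi htop
    have := ne_of_mem_of_not_mem his hpred
    omega

lemma image_insertTop_zero_union_three (n : ℕ) :
    insertTop 0 '' cores (n + 3) ∪ insertTop 3 '' cores n =
      {s | 0 ∉ s ∧ s.sum = n + 3 ∧ OddNodup s} := by
  ext s
  constructor
  · rintro (⟨x, hx, rfl⟩ | ⟨x, hx, rfl⟩)
    · have hpos : 0 < x.1 := hx.fst_pos (by omega)
      exact ⟨hx.zero_notMem_insertTop (by omega), hx.sum_insertTop 0,
        hx.oddNodup_insertTop (by omega)⟩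
    · exact ⟨hx.zero_notMem_insertTop (by omega), hx.sum_insertTop 3,
        hx.oddNodup_insertTop (by omega)⟩
  · rintro ⟨h0, hsum, hodd⟩
    exact mem_image_insertTop_zero_or_three h0 hsum hodd

end Cores

lemma image_parts_eq (n : ℕ) (P : Multiset ℕ → Prop) :
    Nat.Partition.parts '' {p : n.Partition | P p.parts} = {s | 0 ∉ s ∧ s.sum = n ∧ P s} := by
  ext s
  constructor
  · rintro ⟨p, hp, rfl⟩
    exact ⟨fun h ↦ (p.parts_pos h).false, p.parts_sum, hp⟩
  · rintro ⟨h0, hsum, hP⟩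
    exact ⟨⟨s, fun hi ↦ Nat.pos_of_ne_zero (ne_of_mem_of_not_mem hi h0), hsum⟩, hP, rfl⟩

lemma card_partition_eq_ncard (n : ℕ) (P : Multiset ℕ → Prop) :
    Nat.card {p : n.Partition // P p.parts} = {s | 0 ∉ s ∧ s.sum = n ∧ P s}.ncard := by
  rw [← image_parts_eq, Set.ncard_image_of_injective _ fun _ _ ↦ Nat.Partition.ext]
  exact Nat.card_coe_set_eq _

lemma o3_add_two (n : ℕ) : o3 (n + 2) = (cores n).ncard := by
  calc o3 (n + 2)
      = {s : Multiset ℕ | 0 ∉ s ∧ s.sum = n + 2 ∧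
          OddNodup s ∧ s ≠ 0 ∧ Even s.sup ∧ s.count s.sup = 1}.ncard :=
        card_partition_eq_ncard (n + 2)
          fun s ↦ OddNodup s ∧ s ≠ 0 ∧ Even s.sup ∧ s.count s.sup = 1
    _ = (insertTop 2 '' cores n).ncard :=
        congrArg Set.ncard (Set.ext fun _ ↦ mem_image_insertTop_two_iff.symm)
    _ = (cores n).ncard := (insertTop_injOn_cores 2 n).ncard_image

lemma pod_add_three (n : ℕ) : pod (n + 3) = (cores (n + 3)).ncard + (cores n).ncard := by
  have hfin : (insertTop 0 '' cores (n + 3) ∪ insertTop 3 '' cores n).Finite := by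
    rw [image_insertTop_zero_union_three, ← image_parts_eq]
    exact Set.toFinite _
  calc pod (n + 3) = {s | 0 ∉ s ∧ s.sum = n + 3 ∧ OddNodup s}.ncard :=
        card_partition_eq_ncard (n + 3) OddNodup
    _ = (insertTop 0 '' cores (n + 3) ∪ insertTop 3 '' cores n).ncard := by
        rw [image_insertTop_zero_union_three]
    _ = (insertTop 0 '' cores (n + 3)).ncard + (insertTop 3 '' cores n).ncard :=
        Set.ncard_union_eq (disjoint_insertTop_zero_insertTop_three _ _)
          (hfin.subset Set.subset_union_left) (hfin.subset Set.subset_union_right)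
    _ = (cores (n + 3)).ncard + (cores n).ncard := by
        rw [(insertTop_injOn_cores _ _).ncard_image, (insertTop_injOn_cores _ _).ncard_image]

theorem o3_add_o3_eq_pod : ∀ n : ℕ, 2 < n → o3 (n + 2) + o3 (n - 1) = pod n := by
  intro n hn
  obtain ⟨k, rfl⟩ : ∃ k, n = k + 3 := ⟨n - 3, by omega⟩
  calc o3 (k + 3 + 2) + o3 (k + 2) = (cores (k + 3)).ncard + (cores k).ncard := by
        rw [o3_add_two, o3_add_two]
    _ = pod (k + 3) := (pod_add_three k).symm
end

section
/- For every integer n ≥ 2, d1(n-1) equals the number of partitions of n in which no even part is repeated and the largest part is even. (The bijection adds 1 to one copy of the largest part.) -/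
/-!
Let `A` be a set of numbers not allowed to repeat as parts, and let `k > 0` satisfy `k ∉ A` and
`k + 1 ∈ A`. If `t` is a multiset of parts with no repetition from `A`, all of them at most `k`,
then `k ::ₘ t` and `(k + 1) ::ₘ t` again have no repetition from `A`. Every admissible partition
with largest part `k` has the first form. Every admissible partition with largest part `k + 1` has
the second form, since `k + 1` cannot repeat. Exchanging the two forms is the bijection; for
the even numbers `A`, the admissible `k` are the odd numbers.
-/

section MultisetSup

variable {α : Type*} [LinearOrder α] [OrderBot α]

lemma multiset_sup_mem {s : Multiset α} (hs : s.sup ≠ ⊥) : s.sup ∈ s := by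
  induction s using Multiset.induction with
  | empty => exact absurd Multiset.sup_zero hs
  | cons a s ih =>
    rw [Multiset.sup_cons] at hs ⊢
    rcases le_total s.sup a with h | h
    · rw [sup_eq_left.2 h]
      exact Multiset.mem_cons_self a s
    · rw [sup_eq_right.2 h] at hs ⊢
      exact Multiset.mem_cons_of_mem (ih hs)

lemma multiset_sup_cons_of_forall_le_s6 {a : α} {t : Multiset α} (h : ∀ x ∈ t, x ≤ a) :
    (a ::ₘ t).sup = a := by
  rw [Multiset.sup_cons, sup_eq_left.2 (Multiset.sup_le.2 h)]

lemma exists_eq_sup_cons {s : Multiset α} (hs : s.sup ≠ ⊥) :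
    ∃ t, s = s.sup ::ₘ t ∧ ∀ x ∈ t, x ≤ s.sup :=
  ⟨s.erase s.sup, (Multiset.cons_erase (multiset_sup_mem hs)).symm,
    fun _ hx ↦ Multiset.le_sup (Multiset.mem_of_mem_erase hx)⟩

end MultisetSup

lemma multiset_sup_succ_cons_of_forall_le {k : ℕ} {t : Multiset ℕ} (ht : ∀ x ∈ t, x ≤ k) :
    ((k + 1) ::ₘ t).sup = k + 1 :=
  multiset_sup_cons_of_forall_le_s6 fun x hx ↦ (ht x hx).trans k.le_succ

section DistinctOn

variable {α : Type*} [DecidableEq α]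

/-- No element of `A` occurs more than once in the multiset `s`; elements outside `A` may repeat.
Taking `A` to be the even numbers gives `EvenDistinct`. -/
def DistinctOn (A : Set α) (s : Multiset α) : Prop :=
  ∀ i ∈ A, s.count i ≤ 1

variable {A : Set α} {a : α} {t : Multiset α}

lemma distinctOn_cons_of_notMem (ha : a ∉ A) : DistinctOn A (a ::ₘ t) ↔ DistinctOn A t :=
  forall₂_congr fun i hi ↦ by
    rw [Multiset.count_cons_of_ne (ne_of_mem_of_not_mem hi ha)]

lemma distinctOn_cons_of_mem (ha : a ∈ A) :
    DistinctOn A (a ::ₘ t) ↔ a ∉ t ∧ DistinctOn A t := by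
  constructor
  · intro h
    refine ⟨fun hat ↦ ?_, fun i hi ↦ (Multiset.count_le_count_cons i a t).trans (h i hi)⟩
    have hcount := h a ha
    rw [Multiset.count_cons_self] at hcount
    have hpos := Multiset.count_pos.2 hat
    omega
  · rintro ⟨hat, ht⟩ i hi
    rcases eq_or_ne i a with rfl | hia
    · rw [Multiset.count_cons_self, Multiset.count_eq_zero_of_notMem hat]
    · rw [Multiset.count_cons_of_ne hia]
      exact ht i hi

end DistinctOn

/-- The multiset obtained from `s` by adding `1` to one copy of its largest element. -/
def raiseMax (s : Multiset ℕ) : Multiset ℕ :=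
  (s.sup + 1) ::ₘ s.erase s.sup

lemma raiseMax_cons {k : ℕ} {t : Multiset ℕ} (ht : ∀ x ∈ t, x ≤ k) :
    raiseMax (k ::ₘ t) = (k + 1) ::ₘ t := by
  rw [raiseMax, multiset_sup_cons_of_forall_le_s6 ht, Multiset.erase_cons_head]

/-- The part multisets of the partitions of `n` in which no part from `A` is repeated and whose
largest part lies in `K`. Plain multisets replace `Nat.Partition n` so that a map changing the sum
needs no dependent types. -/
def partsWithMax (A K : Set ℕ) (n : ℕ) : Set (Multiset ℕ) :=
  {s | (∀ i ∈ s, 0 < i) ∧ s.sum = n ∧ DistinctOn A s ∧ s.sup ∈ K}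

lemma card_partition_eq_ncard_partsWithMax (A K : Set ℕ) (n : ℕ) :
    Nat.card {p : n.Partition // DistinctOn A p.parts ∧ maxPart p ∈ K} =
      (partsWithMax A K n).ncard := by
  have parts_image : partsWithMax A K n =
      Nat.Partition.parts '' {p : n.Partition | DistinctOn A p.parts ∧ maxPart p ∈ K} := by
    ext s
    constructor
    · rintro ⟨hpos, hsum, hs⟩
      exact ⟨⟨s, hpos _, hsum⟩, hs, rfl⟩
    · rintro ⟨p, hp, rfl⟩
      exact ⟨fun _ ↦ p.parts_pos, p.parts_sum, hp⟩
  have parts_injective : Function.Injective (Nat.Partition.parts (n := n)) :=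
    fun _ _ ↦ Nat.Partition.ext
  rw [parts_image, Set.ncard_image_of_injective _ parts_injective]
  rfl

section RaiseMax

variable {A K : Set ℕ} {n : ℕ}

lemma exists_cons_of_mem_partsWithMax (hK : 0 ∉ K) {s : Multiset ℕ}
    (hs : s ∈ partsWithMax A K n) : ∃ k ∈ K, ∃ t, s = k ::ₘ t ∧ ∀ x ∈ t, x ≤ k :=
  ⟨s.sup, hs.2.2.2, exists_eq_sup_cons (ne_of_mem_of_not_mem hs.2.2.2 hK)⟩

lemma exists_succ_cons_of_mem_partsWithMax (hKA : ∀ k ∈ K, k + 1 ∈ A) {s : Multiset ℕ}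
    (hs : s ∈ partsWithMax A ((· + 1) '' K) n) :
    ∃ k ∈ K, ∃ t, s = (k + 1) ::ₘ t ∧ ∀ x ∈ t, x ≤ k := by
  obtain ⟨_, ⟨k, hk, rfl⟩, t, rfl, ht⟩ := exists_cons_of_mem_partsWithMax (by simp) hs
  have succ_notMem : k + 1 ∉ t := ((distinctOn_cons_of_mem (hKA k hk)).1 hs.2.2.1).1
  exact ⟨k, hk, t, rfl, fun x hx ↦
    Nat.le_of_lt_succ ((ht x hx).lt_of_ne (ne_of_mem_of_not_mem hx succ_notMem))⟩

lemma succ_cons_mem_partsWithMax_iff {k : ℕ} {t : Multiset ℕ} (hk : k ∈ K) (hpos : 0 < k)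
    (hkA : k ∉ A) (hkA' : k + 1 ∈ A) (ht : ∀ x ∈ t, x ≤ k) :
    (k + 1) ::ₘ t ∈ partsWithMax A ((· + 1) '' K) (n + 1) ↔ k ::ₘ t ∈ partsWithMax A K n := by
  have succ_notMem : k + 1 ∉ t := fun h ↦ Nat.not_succ_le_self k (ht _ h)
  have sum_iff : k + 1 + t.sum = n + 1 ↔ k + t.sum = n := by omega
  simp only [partsWithMax, Set.mem_ofPred_eq, Multiset.forall_mem_cons, Multiset.sum_cons,
    distinctOn_cons_of_mem hkA', distinctOn_cons_of_notMem hkA,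
    multiset_sup_succ_cons_of_forall_le ht, multiset_sup_cons_of_forall_le_s6 ht,
    Set.mem_image_of_mem (· + 1) hk, sum_iff, succ_notMem, hk, hpos, k.succ_pos,
    not_false_eq_true, true_and]

lemma injOn_raiseMax (hK : 0 ∉ K) : Set.InjOn raiseMax (partsWithMax A K n) := by
  intro s hs s' hs' h
  obtain ⟨k, -, t, rfl, ht⟩ := exists_cons_of_mem_partsWithMax hK hs
  obtain ⟨l, -, u, rfl, hu⟩ := exists_cons_of_mem_partsWithMax hK hs'
  rw [raiseMax_cons ht, raiseMax_cons hu] at h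
  have hkl : k + 1 = l + 1 := by
    rw [← multiset_sup_succ_cons_of_forall_le ht, h, multiset_sup_succ_cons_of_forall_le hu]
  obtain rfl : k = l := Nat.succ_injective hkl
  rw [(Multiset.cons_inj_right _).1 h]

lemma bijOn_raiseMax (hK : ∀ k ∈ K, 0 < k ∧ k ∉ A ∧ k + 1 ∈ A) :
    Set.BijOn raiseMax (partsWithMax A K n) (partsWithMax A ((· + 1) '' K) (n + 1)) := by
  have zero_notMem : 0 ∉ K := fun h ↦ (hK 0 h).1.false
  refine ⟨fun s hs ↦ ?_, injOn_raiseMax zero_notMem, fun s hs ↦ ?_⟩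
  · obtain ⟨k, hk, t, rfl, ht⟩ := exists_cons_of_mem_partsWithMax zero_notMem hs
    obtain ⟨hpos, hkA, hkA'⟩ := hK k hk
    rw [raiseMax_cons ht]
    exact (succ_cons_mem_partsWithMax_iff hk hpos hkA hkA' ht).2 hs
  · obtain ⟨k, hk, t, rfl, ht⟩ :=
      exists_succ_cons_of_mem_partsWithMax (fun k hk ↦ (hK k hk).2.2) hs
    obtain ⟨hpos, hkA, hkA'⟩ := hK k hk
    exact ⟨k ::ₘ t, (succ_cons_mem_partsWithMax_iff hk hpos hkA hkA' ht).1 hs, raiseMax_cons ht⟩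

end RaiseMax

theorem d1_eq_card_largest_even_general (A K : Set ℕ)
    (hK : ∀ k ∈ K, 0 < k ∧ k ∉ A ∧ k + 1 ∈ A) (n : ℕ) :
    Nat.card {p : n.Partition // DistinctOn A p.parts ∧ maxPart p ∈ K} =
      Nat.card {p : (n + 1).Partition //
        DistinctOn A p.parts ∧ maxPart p ∈ (· + 1) '' K} := by
  rw [card_partition_eq_ncard_partsWithMax, card_partition_eq_ncard_partsWithMax]
  exact (bijOn_raiseMax hK).ncard_eq

section MaxPart

variable {n : ℕ} (p : n.Partition)

lemma parts_ne_zero_iff_maxPart_pos : p.parts ≠ 0 ↔ 0 < maxPart p := by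
  constructor
  · intro h
    obtain ⟨i, hi⟩ := Multiset.exists_mem_of_ne_zero h
    exact (p.parts_pos hi).trans_le (Multiset.le_sup hi)
  · intro h hzero
    rw [maxPart, hzero] at h
    exact h.false

lemma parts_ne_zero_and_odd_maxPart_iff :
    p.parts ≠ 0 ∧ Odd (maxPart p) ↔ maxPart p ∈ {k | Odd k} := by
  rw [parts_ne_zero_iff_maxPart_pos]
  exact and_iff_right_of_imp Odd.pos

lemma parts_ne_zero_and_even_maxPart_iff :
    p.parts ≠ 0 ∧ Even (maxPart p) ↔ maxPart p ∈ (· + 1) '' {k | Odd k} := by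
  rw [parts_ne_zero_iff_maxPart_pos]
  constructor
  · rintro ⟨hpos, heven⟩
    exact ⟨maxPart p - 1, Nat.Even.sub_odd hpos heven odd_one, Nat.sub_add_cancel hpos⟩
  · rintro ⟨k, hk, hmax⟩
    rw [← hmax]
    exact ⟨k.succ_pos, Odd.add_one hk⟩

end MaxPart

theorem d1_eq_card_largest_even : ∀ n : ℕ, 2 ≤ n →
    d1 (n - 1) =
      Nat.card {p : n.Partition // EvenDistinct p ∧ p.parts ≠ 0 ∧ Even (maxPart p)} := by
  intro n hn
  obtain ⟨m, rfl⟩ : ∃ m, n = m + 1 := ⟨n - 1, by omega⟩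
  have odd_spec (k : ℕ) (hk : Odd k) : 0 < k ∧ ¬ Even k ∧ Even (k + 1) :=
    ⟨hk.pos, Nat.not_even_iff_odd.2 hk, hk.add_one⟩
  simp only [d1, parts_ne_zero_and_odd_maxPart_iff, parts_ne_zero_and_even_maxPart_iff]
  exact d1_eq_card_largest_even_general {i | Even i} {k | Odd k} odd_spec m
end

section
/- For every integer n ≥ 4, d2(n-3) equals the number of partitions of n in which no even part is repeated, the largest part is odd, and the second largest part equals the largest part minus 1 (i.e., partitions of the form (2j+1, 2j, h, ...) with h ≤ 2j - 1 and no even part repeated). (The bijection adds 2 to one copy of the largest part and 1 to the other copy of the largest part.) -/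
/-!
Deleting the two largest parts of a partition of either kind leaves the same data: an odd number
`M` and positive parts of size at most `M` with no even part repeated. Putting back `M, M` gives the
partitions counted by `d2`. Putting back `M + 2, M + 1` gives those whose largest part is odd and
whose second largest part is one less. The even part `M + 1` is not repeated, since it exceeds every
remaining part.
-/

theorem le_maxPart {n i : ℕ} {p : n.Partition} (hi : i ∈ p.parts) : i ≤ maxPart p :=
  Multiset.le_sup hi

/-- A partition of `m` with two distinguished copies of an odd largest part `top`, the other parts
being `rest`, in which no even part is repeated. Keeping `top` and `rest` apart allows the two
copies of `top` to be changed independently. -/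
@[ext]
structure OddTopPair (m : ℕ) where
  top : ℕ
  rest : Multiset ℕ
  odd_top : Odd top
  pos_of_mem_rest : ∀ i ∈ rest, 0 < i
  le_top_of_mem_rest : ∀ i ∈ rest, i ≤ top
  count_rest_le_one : ∀ i, Even i → rest.count i ≤ 1
  sum_eq : top + top + rest.sum = m

namespace OddTopPair

variable {m a b : ℕ}

/-- The partition obtained by adding `a` to one copy of the largest part and `b` to the other. -/
def raise (a b : ℕ) (c : OddTopPair m) : (m + (a + b)).Partition where
  parts := (c.top + a) ::ₘ (c.top + b) ::ₘ c.rest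
  parts_pos := by
    have top_pos := c.odd_top.pos
    intro i hi
    rcases Multiset.mem_cons.1 hi with rfl | hi
    · exact Nat.add_pos_left top_pos a
    rcases Multiset.mem_cons.1 hi with rfl | hi
    · exact Nat.add_pos_left top_pos b
    · exact c.pos_of_mem_rest i hi
  parts_sum := by
    have sum_eq := c.sum_eq
    simp only [Multiset.sum_cons]
    omega

theorem parts_raise (c : OddTopPair m) :
    (c.raise a b).parts = (c.top + a) ::ₘ (c.top + b) ::ₘ c.rest :=
  rfl

theorem maxPart_raise (hba : b ≤ a) (c : OddTopPair m) : maxPart (c.raise a b) = c.top + a := by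
  have sup_rest_le : c.rest.sup ≤ c.top := Multiset.sup_le.2 c.le_top_of_mem_rest
  simp only [maxPart, parts_raise, Multiset.sup_cons]
  omega

theorem raise_injective (hba : b ≤ a) :
    Function.Injective (raise a b : OddTopPair m → (m + (a + b)).Partition) := by
  intro c d h
  have top_eq : c.top = d.top := by
    have := congrArg maxPart h
    rwa [maxPart_raise hba, maxPart_raise hba, Nat.add_right_cancel_iff] at this
  have parts_eq := congrArg Nat.Partition.parts h
  rw [parts_raise, parts_raise, top_eq, Multiset.cons_inj_right, Multiset.cons_inj_right]
    at parts_eq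
  exact OddTopPair.ext top_eq parts_eq

theorem count_rest_eq_zero_of_top_lt (c : OddTopPair m) {i : ℕ} (hi : c.top < i) :
    c.rest.count i = 0 :=
  Multiset.count_eq_zero.2 fun h => (c.le_top_of_mem_rest i h).not_gt hi

theorem evenDistinct_raise (ha : Even a) (hb : Even b ∨ 0 < b) (c : OddTopPair m) :
    EvenDistinct (c.raise a b) := by
  intro i hi
  have ne_top_add {k : ℕ} (hk : Even k) : i ≠ c.top + k := fun h =>
    Nat.not_even_iff_odd.2 (c.odd_top.add_even hk) (h ▸ hi)
  rw [parts_raise, Multiset.count_cons_of_ne (ne_top_add ha)]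
  by_cases h : i = c.top + b
  · have b_pos : 0 < b := hb.resolve_left fun hb => ne_top_add hb h
    rw [h, Multiset.count_cons_self, c.count_rest_eq_zero_of_top_lt (Nat.lt_add_of_pos_right b_pos)]
  · rw [Multiset.count_cons_of_ne h]
    exact c.count_rest_le_one i hi

theorem mem_range_raise {p : (m + (a + b)).Partition} {M : ℕ} {s : Multiset ℕ}
    (hp : p.parts = (M + a) ::ₘ (M + b) ::ₘ s) (hM : Odd M) (hs : ∀ i ∈ s, i ≤ M)
    (heven : EvenDistinct p) : p ∈ Set.range (raise a b) := by
  have rest_le : s ≤ p.parts :=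
    hp ▸ (Multiset.le_cons_self _ _).trans (Multiset.le_cons_self _ _)
  have sum_eq : M + M + s.sum = m := by
    have := p.parts_sum
    simp only [hp, Multiset.sum_cons] at this
    omega
  exact ⟨{
    top := M
    rest := s
    odd_top := hM
    pos_of_mem_rest := fun i hi => p.parts_pos (Multiset.mem_of_le rest_le hi)
    le_top_of_mem_rest := hs
    count_rest_le_one := fun i hi => (Multiset.count_le_of_le i rest_le).trans (heven i hi)
    sum_eq := sum_eq }, Nat.Partition.ext hp.symm⟩

end OddTopPair

open OddTopPair

theorem mem_range_raise_zero_zero_iff {m : ℕ} (p : m.Partition) :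
    p ∈ Set.range (raise 0 0) ↔
      EvenDistinct p ∧ Odd (maxPart p) ∧ 2 ≤ p.parts.count (maxPart p) := by
  constructor
  · rintro ⟨c, rfl⟩
    have max_eq : maxPart (c.raise 0 0) = c.top := maxPart_raise le_rfl c
    refine ⟨evenDistinct_raise .zero (.inl .zero) c, max_eq ▸ c.odd_top, ?_⟩
    rw [max_eq, parts_raise]
    simp
  · rintro ⟨heven, hodd, hcount⟩
    obtain ⟨s, hs⟩ := Multiset.le_iff_exists_add.1 (Multiset.le_count_iff_replicate_le.1 hcount)
    have parts_eq : p.parts = maxPart p ::ₘ maxPart p ::ₘ s := by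
      simpa [Multiset.replicate_succ] using hs
    exact mem_range_raise parts_eq hodd (fun i hi => le_maxPart (by simp [parts_eq, hi])) heven

theorem mem_range_raise_two_one_iff {m : ℕ} (p : (m + 3).Partition) :
    p ∈ Set.range (raise 2 1) ↔
      EvenDistinct p ∧ Odd (maxPart p) ∧
        p.parts.count (maxPart p) = 1 ∧ maxPart p - 1 ∈ p.parts := by
  constructor
  · rintro ⟨c, rfl⟩
    have max_eq : maxPart (c.raise 2 1) = c.top + 2 := maxPart_raise one_le_two c
    refine ⟨evenDistinct_raise even_two (.inr one_pos) c, max_eq ▸ c.odd_top.add_even even_two,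
      ?_, ?_⟩
    · rw [max_eq, parts_raise, Multiset.count_cons_self, Multiset.count_cons_of_ne (by simp),
        c.count_rest_eq_zero_of_top_lt (by simp)]
    · rw [max_eq, parts_raise]
      simp
  · rintro ⟨heven, hodd, hcount, hpred⟩
    obtain ⟨M, hM⟩ : ∃ M, maxPart p = M + 2 :=
      Nat.exists_eq_add_of_le' (by have := p.parts_pos hpred; omega)
    rw [hM] at hodd hcount hpred
    have odd_M : Odd M := by simpa [Nat.odd_add] using hodd
    obtain ⟨q, hq⟩ := Multiset.exists_cons_of_mem (Multiset.one_le_count_iff_mem.1 hcount.ge)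
    have pred_mem : M + 1 ∈ q := by simpa [hq] using hpred
    obtain ⟨s, rfl⟩ := Multiset.exists_cons_of_mem pred_mem
    have max_notMem : M + 2 ∉ s := by simpa [hq] using hcount
    have pred_notMem : M + 1 ∉ s := by simpa [hq] using heven (M + 1) odd_M.add_one
    refine mem_range_raise hq odd_M (fun i hi => ?_) heven
    have i_le : i ≤ M + 2 := hM ▸ le_maxPart (by simp [hq, hi])
    have i_ne_max : i ≠ M + 2 := ne_of_mem_of_not_mem hi max_notMem
    have i_ne_pred : i ≠ M + 1 := ne_of_mem_of_not_mem hi pred_notMem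
    omega

theorem d2_eq_card_largest_odd_second_pred : ∀ n : ℕ, 4 ≤ n →
    d2 (n - 3) =
      Nat.card {p : n.Partition // EvenDistinct p ∧ Odd (maxPart p) ∧
        p.parts.count (maxPart p) = 1 ∧ maxPart p - 1 ∈ p.parts} := by
  intro n hn
  obtain ⟨m, rfl⟩ : ∃ m, n = m + 3 := Nat.exists_eq_add_of_le' (by omega)
  calc
    d2 m = Nat.card (Set.range (raise 0 0 : OddTopPair m → m.Partition)) :=
      Nat.card_congr (Equiv.subtypeEquivRight fun p => (mem_range_raise_zero_zero_iff p).symm)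
    _ = Nat.card (OddTopPair m) := Nat.card_range_of_injective (raise_injective le_rfl)
    _ = Nat.card (Set.range (raise 2 1 : OddTopPair m → (m + 3).Partition)) :=
      (Nat.card_range_of_injective (raise_injective one_le_two)).symm
    _ = _ := Nat.card_congr (Equiv.subtypeEquivRight mem_range_raise_two_one_iff)
end

section
/- For every integer n ≥ 4, o2(n-3) equals the number of partitions of n in which no odd part is repeated, the largest part is even, and the second largest part equals the largest part minus 1 (i.e., partitions of the form (2ℓ, 2ℓ-1, h, ...) with h ≤ 2ℓ - 2 and no odd part repeated). (The bijection adds 2 to one copy of the largest part and 1 to the other copy of the largest part.) -/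
/-- Number of partitions of n with no odd part repeated, largest part even,
and the largest part appearing at least twice. -/
noncomputable def o2 (n : ℕ) : ℕ :=
  Nat.card {p : n.Partition // OddDistinct p ∧ p.parts ≠ 0 ∧ Even (maxPart p) ∧
    2 ≤ p.parts.count (maxPart p)}

lemma le_of_mem_of_parts_eq_cons_cons {n m : ℕ} {p : n.Partition} {s : Multiset ℕ}
    (hparts : p.parts = (m + 2) ::ₘ (m + 1) ::ₘ s) (hmax : maxPart p = m + 2)
    (htwo : p.parts.count (m + 2) ≤ 1) (hone : p.parts.count (m + 1) ≤ 1) :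
    ∀ i ∈ s, i ≤ m := by
  intro i hi
  have hi_max : i ≤ m + 2 :=
    hmax ▸ Multiset.le_sup (hparts ▸ Multiset.mem_cons_of_mem (Multiset.mem_cons_of_mem hi))
  have hi_two : i ≠ m + 2 := by
    rintro rfl
    simp [hparts, hi] at htwo
  have hi_one : i ≠ m + 1 := by
    rintro rfl
    simp [hparts, hi] at hone
  omega

lemma exists_parts_eq_cons_cons_of_pred_mem {n : ℕ} {p : n.Partition} (hodd : OddDistinct p)
    (heven : Even (maxPart p)) (hcount : p.parts.count (maxPart p) = 1)
    (hpred : maxPart p - 1 ∈ p.parts) :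
    ∃ m s, p.parts = (m + 2) ::ₘ (m + 1) ::ₘ s ∧ Even m ∧ ∀ i ∈ s, i ≤ m := by
  have hmem : maxPart p ∈ p.parts := Multiset.one_le_count_iff_mem.1 hcount.ge
  have htwo_le : 2 ≤ maxPart p := Nat.le_of_dvd (p.parts_pos hmem) heven.two_dvd
  obtain ⟨m, hm⟩ : ∃ m, maxPart p = m + 2 := Nat.exists_eq_add_of_le' htwo_le
  rw [hm] at heven hcount hpred hmem
  have hm_even : Even m := by simpa [Nat.even_add] using heven
  obtain ⟨t, ht⟩ := Multiset.exists_cons_of_mem hmem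
  have hpred_t : m + 1 ∈ t := by simpa [ht] using hpred
  obtain ⟨s, rfl⟩ := Multiset.exists_cons_of_mem hpred_t
  exact ⟨m, s, ht, hm_even,
    le_of_mem_of_parts_eq_cons_cons ht hm hcount.le (hodd _ hm_even.add_one)⟩

/-- A partition `(top, top, rest)` of `k` of the kind counted by `o2 k`, recorded with two copies of
its largest part split off. -/
@[ext]
structure O2Core (k : ℕ) where
  top : ℕ
  rest : Multiset ℕ
  top_pos : 0 < top
  even_top : Even top
  rest_pos : ∀ i ∈ rest, 0 < i
  rest_le_top : ∀ i ∈ rest, i ≤ top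
  count_rest_le_one : ∀ i, Odd i → rest.count i ≤ 1
  sum_eq : top + top + rest.sum = k

namespace O2Core

variable {k a b : ℕ}

/-- The partition `(top + a, top + b, rest)`: one of the two split-off parts is increased by `a` and
the other by `b`. Both families of the theorem are ranges of this map, for `(a, b) = (0, 0)` and
`(a, b) = (2, 1)`. -/
def raiseTop (a b : ℕ) (c : O2Core k) : (k + a + b).Partition where
  parts := (c.top + a) ::ₘ (c.top + b) ::ₘ c.rest
  parts_pos := by
    simpa only [Multiset.forall_mem_cons] using
      ⟨Nat.add_pos_left c.top_pos a, Nat.add_pos_left c.top_pos b, c.rest_pos⟩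
  parts_sum := by
    have hsum := c.sum_eq
    simp only [Multiset.sum_cons]
    omega

lemma parts_raiseTop (c : O2Core k) :
    (raiseTop a b c).parts = (c.top + a) ::ₘ (c.top + b) ::ₘ c.rest :=
  rfl

lemma add_notMem_rest (c : O2Core k) (ha : 0 < a) : c.top + a ∉ c.rest := fun hmem => by
  have := c.rest_le_top _ hmem
  omega

lemma maxPart_raiseTop (hba : b ≤ a) (c : O2Core k) : maxPart (raiseTop a b c) = c.top + a := by
  have hrest : c.rest.sup ≤ c.top + a :=
    Multiset.sup_le.2 fun i hi => (c.rest_le_top i hi).trans (Nat.le_add_right _ _)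
  simp [maxPart, parts_raiseTop, hba, hrest]

lemma oddDistinct_raiseTop (ha : Even a) (c : O2Core k) : OddDistinct (raiseTop a b c) := by
  intro i hi
  have hia : i ≠ c.top + a := by
    rintro rfl
    exact Nat.not_even_iff_odd.2 hi (c.even_top.add ha)
  rw [parts_raiseTop, Multiset.count_cons_of_ne hia]
  by_cases hib : i = c.top + b
  · subst hib
    have hb : Odd b := (Nat.odd_add'.1 hi).2 c.even_top
    simp [Multiset.count_eq_zero.2 (c.add_notMem_rest hb.pos)]
  · simpa only [Multiset.count_cons_of_ne hib] using c.count_rest_le_one i hi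

lemma raiseTop_injective (hba : b ≤ a) :
    Function.Injective (raiseTop a b : O2Core k → (k + a + b).Partition) := by
  intro c d hcd
  have htop : c.top = d.top := by
    have hmax := congrArg maxPart hcd
    rwa [maxPart_raiseTop hba, maxPart_raiseTop hba, Nat.add_right_cancel_iff] at hmax
  have hparts := congrArg Nat.Partition.parts hcd
  simp only [parts_raiseTop, htop, Multiset.cons_inj_right] at hparts
  exact O2Core.ext htop hparts

lemma card_range_raiseTop (hba : b ≤ a) :
    Nat.card (Set.range (raiseTop a b : O2Core k → (k + a + b).Partition)) =
      Nat.card (O2Core k) :=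
  Nat.card_range_of_injective (raiseTop_injective hba)

lemma mem_range_raiseTop_of_parts_eq {p : (k + a + b).Partition} {m : ℕ} {s : Multiset ℕ}
    (hparts : p.parts = (m + a) ::ₘ (m + b) ::ₘ s) (hpos : 0 < m) (heven : Even m)
    (hle : ∀ i ∈ s, i ≤ m) (hodd : OddDistinct p) :
    p ∈ Set.range (raiseTop a b) := by
  have hs : s ≤ p.parts :=
    hparts ▸ (Multiset.le_cons_self _ _).trans (Multiset.le_cons_self _ _)
  have hsum : m + m + s.sum = k := by
    have := p.parts_sum
    simp only [hparts, Multiset.sum_cons] at this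
    omega
  let c : O2Core k :=
    { top := m
      rest := s
      top_pos := hpos
      even_top := heven
      rest_pos := fun _ hi => p.parts_pos (Multiset.mem_of_le hs hi)
      rest_le_top := hle
      count_rest_le_one := fun i hi => (Multiset.count_le_of_le i hs).trans (hodd i hi)
      sum_eq := hsum }
  exact ⟨c, Nat.Partition.ext hparts.symm⟩

lemma mem_range_raiseTop_zero_zero_iff {p : k.Partition} :
    p ∈ Set.range (raiseTop 0 0 : O2Core k → k.Partition) ↔
      OddDistinct p ∧ p.parts ≠ 0 ∧ Even (maxPart p) ∧ 2 ≤ p.parts.count (maxPart p) := by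
  constructor
  · rintro ⟨c, rfl⟩
    have hmax : maxPart (raiseTop 0 0 c) = c.top := maxPart_raiseTop le_rfl c
    refine ⟨oddDistinct_raiseTop .zero c, Multiset.cons_ne_zero, ?_, ?_⟩
    · exact hmax ▸ c.even_top
    · rw [hmax]
      simp [parts_raiseTop]
  · rintro ⟨hodd, -, heven, hcount⟩
    obtain ⟨s, hs⟩ :=
      Multiset.le_iff_exists_add.1 (Multiset.le_count_iff_replicate_le.1 hcount)
    have hparts : p.parts = maxPart p ::ₘ maxPart p ::ₘ s := by
      simpa [Multiset.replicate_succ] using hs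
    have hmem : maxPart p ∈ p.parts := hparts ▸ Multiset.mem_cons_self _ _
    have hle : ∀ i ∈ s, i ≤ maxPart p := fun i hi =>
      Multiset.le_sup (hparts ▸ Multiset.mem_cons_of_mem (Multiset.mem_cons_of_mem hi))
    exact mem_range_raiseTop_of_parts_eq hparts (p.parts_pos hmem) heven hle hodd

lemma mem_range_raiseTop_two_one_iff (hk : 0 < k) {p : (k + 2 + 1).Partition} :
    p ∈ Set.range (raiseTop 2 1 : O2Core k → (k + 2 + 1).Partition) ↔
      OddDistinct p ∧ Even (maxPart p) ∧
        p.parts.count (maxPart p) = 1 ∧ maxPart p - 1 ∈ p.parts := by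
  constructor
  · rintro ⟨c, rfl⟩
    have hmax : maxPart (raiseTop 2 1 c) = c.top + 2 := maxPart_raiseTop one_le_two c
    refine ⟨oddDistinct_raiseTop even_two c, ?_, ?_, ?_⟩
    · exact hmax ▸ c.even_top.add even_two
    · rw [hmax]
      simp [parts_raiseTop, c.add_notMem_rest two_pos]
    · rw [hmax]
      simp [parts_raiseTop]
  · rintro ⟨hodd, heven, hcount, hpred⟩
    obtain ⟨m, s, hparts, hm_even, hle⟩ :=
      exists_parts_eq_cons_cons_of_pred_mem hodd heven hcount hpred
    -- If `m = 0`, then `p` is the partition `(2, 1)` of `3`.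
    have hm : 0 < m := by
      refine Nat.pos_of_ne_zero fun hm => hk.ne' ?_
      have hsum := p.parts_sum
      have hs : s.sum = 0 := Multiset.sum_eq_zero fun i hi => by simpa [hm] using hle i hi
      simp only [hparts, Multiset.sum_cons] at hsum
      omega
    exact mem_range_raiseTop_of_parts_eq hparts hm hm_even hle hodd

end O2Core

lemma o2_eq_card_o2Core (k : ℕ) : o2 k = Nat.card (O2Core k) :=
  calc o2 k = Nat.card (Set.range (O2Core.raiseTop 0 0 : O2Core k → k.Partition)) :=
        Nat.card_congr (Equiv.subtypeEquivRight fun _ =>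
          O2Core.mem_range_raiseTop_zero_zero_iff.symm)
    _ = Nat.card (O2Core k) := O2Core.card_range_raiseTop le_rfl

theorem o2_eq_card_largest_even_second_pred : ∀ n : ℕ, 4 ≤ n →
    o2 (n - 3) =
      Nat.card {p : n.Partition // OddDistinct p ∧ Even (maxPart p) ∧
        p.parts.count (maxPart p) = 1 ∧ maxPart p - 1 ∈ p.parts} := by
  intro n hn
  obtain ⟨k, rfl⟩ : ∃ k, n = k + 2 + 1 := ⟨n - 3, by omega⟩
  have hk : 0 < k := by omega
  calc o2 k = Nat.card (O2Core k) := o2_eq_card_o2Core k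
    _ = Nat.card (Set.range (O2Core.raiseTop 2 1 : O2Core k → (k + 2 + 1).Partition)) :=
        (O2Core.card_range_raiseTop one_le_two).symm
    _ = _ := Nat.card_congr (Equiv.subtypeEquivRight fun _ =>
        O2Core.mem_range_raiseTop_two_one_iff hk)
end
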